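/- Let T be a finite rooted ternary tree (each node has 0 or 3 children) with set of internal nodes T⁰, let t ∈ [0,1], and for each v ∈ T⁰ let σ_v ∈ ℝ. Define I = ∫_{R(T,t)} ∏_{v∈T⁰} e^{iσ_v s_v} ds, where R(T,t) = {s ∈ [0,t]^{T⁰} : s_v ≤ s_w whenever v is a descendant of w}. Then |I| ≤ (Ct)^{|T⁰|/2} ∏_{v∈T⁰} ⟨σ_v⟩^{−1/2} for an absolute constant C. -/

import Mathlib

open MeasureTheory

/-- Finite rooted trees in which every node has either zero or three children. -/
inductive TernaryTree : Type where
  | leaf : TernaryTree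
  | node : TernaryTree → TernaryTree → TernaryTree → TernaryTree

/-- The type of internal (non-terminal) nodes of a ternary tree `T`, i.e. `T⁰`. -/
def TernaryTree.Idx : TernaryTree → Type
  | .leaf => Empty
  | .node a b c => Unit ⊕ (a.Idx ⊕ b.Idx ⊕ c.Idx)

instance TernaryTree.instFintypeIdx : (T : TernaryTree) → Fintype T.Idx
  | .leaf => inferInstanceAs (Fintype Empty)
  | .node a b c =>
    letI := instFintypeIdx a
    letI := instFintypeIdx b
    letI := instFintypeIdx c
    inferInstanceAs (Fintype (Unit ⊕ (a.Idx ⊕ b.Idx ⊕ c.Idx)))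

/-- `T.desc v w` means that `v` is a (proper) descendant of `w` in `T`. -/
def TernaryTree.desc : (T : TernaryTree) → T.Idx → T.Idx → Prop
  | .leaf, v, _ => v.elim
  | .node _ _ _, .inl _, _ => False
  | .node _ _ _, .inr _, .inl _ => True
  | .node a _ _, .inr (.inl v'), .inr (.inl w') => a.desc v' w'
  | .node _ b _, .inr (.inr (.inl v')), .inr (.inr (.inl w')) => b.desc v' w'
  | .node _ _ c, .inr (.inr (.inr v')), .inr (.inr (.inr w')) => c.desc v' w'
  | .node _ _ _, .inr _, .inr _ => False

/-- The tree-ordered simplex `R(T,t)`. -/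
def TernaryTree.simplex (T : TernaryTree) (t : ℝ) : Set (T.Idx → ℝ) :=
  {s | (∀ v, s v ∈ Set.Icc 0 t) ∧ ∀ v w, T.desc v w → s v ≤ s w}

/-!
Writing the integral as an iterated integral `I_T(t) = ∫₀ᵗ e^{iσx} I_a(x) I_b(x) I_c(x) dx` over the
subtrees at the root, one controls both its size and its norm `‖f‖ = |f(0)| + ∫₀ᵗ |f'|`. This norm
is submultiplicative, and integration by parts bounds `∫₀ᵗ e^{iσx} f(x) dx` by `(t + 2) ⟨σ⟩⁻¹ ‖f‖`;
so the root gains `⟨σ⟩⁻¹` on the size if the subtrees are controlled in norm. Conversely the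
derivative of `I_T` is, up to a phase, the product of the `I_a`, `I_b`, `I_c`, so the root costs a
factor `t` on the norm if only the sizes of the subtrees are controlled. Alternating the two
estimates down the tree gains at every other generation; the two choices of parity bound the same
integral, and their geometric mean is the estimate.
-/

section VariationNorm

variable {E : Type*} [NormedAddCommGroup E] [NormedSpace ℝ E]

/-- The `W^{1,1}`-type norm `‖f a‖ + ∫ₐᵇ ‖f'‖` of a `C¹` function on `[a, b]`. Evaluating at the
endpoint, rather than taking a supremum, makes it submultiplicative with constant `1`. -/
noncomputable def variationNorm (f : ℝ → E) (a b : ℝ) : ℝ :=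
  ‖f a‖ + ∫ x in a..b, ‖deriv f x‖

theorem hasDerivAt_variationNorm {f : ℝ → E} (hf : ContDiff ℝ 1 f) (a x : ℝ) :
    HasDerivAt (variationNorm f a) ‖deriv f x‖ x :=
  (hf.continuous_deriv_one.norm.integral_hasStrictDerivAt a x).hasDerivAt.const_add _

theorem norm_sub_le_integral_norm_deriv [CompleteSpace E] {f : ℝ → E} (hf : ContDiff ℝ 1 f)
    {a b : ℝ} (hab : a ≤ b) : ‖f b - f a‖ ≤ ∫ x in a..b, ‖deriv f x‖ := by
  rw [← intervalIntegral.integral_deriv_eq_sub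
    (fun x _ => (hf.differentiable one_ne_zero).differentiableAt)
    (hf.continuous_deriv_one.intervalIntegrable a b)]
  exact intervalIntegral.norm_integral_le_integral_norm hab

theorem norm_le_variationNorm [CompleteSpace E] {f : ℝ → E} (hf : ContDiff ℝ 1 f) {a b : ℝ}
    (hab : a ≤ b) : ‖f b‖ ≤ variationNorm f a b :=
  (norm_le_norm_add_norm_sub' _ _).trans
    (add_le_add_right (norm_sub_le_integral_norm_deriv hf hab) _)

theorem variationNorm_mono {f : ℝ → E} (hf : ContDiff ℝ 1 f) {a b c : ℝ} (hab : a ≤ b)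
    (hbc : b ≤ c) : variationNorm f a b ≤ variationNorm f a c :=
  add_le_add_right (intervalIntegral.integral_mono_interval le_rfl hab hbc
    (Filter.Eventually.of_forall fun _ => norm_nonneg _)
    (hf.continuous_deriv_one.norm.intervalIntegrable a c)) _

theorem variationNorm_const (z : E) (a b : ℝ) : variationNorm (fun _ => z) a b = ‖z‖ := by
  simp [variationNorm]

theorem variationNorm_nonneg (f : ℝ → E) {a b : ℝ} (hab : a ≤ b) : 0 ≤ variationNorm f a b :=
  add_nonneg (norm_nonneg _) (intervalIntegral.integral_nonneg hab fun _ _ => norm_nonneg _)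

theorem contDiff_one_integral [CompleteSpace E] {g : ℝ → E} (hg : Continuous g) (a : ℝ) :
    ContDiff ℝ 1 fun t => ∫ x in a..t, g x :=
  contDiff_one_iff_deriv.2
    ⟨fun t => (hg.integral_hasStrictDerivAt a t).hasDerivAt.differentiableAt,
      by simpa only [funext (hg.deriv_integral g a)] using hg⟩

theorem variationNorm_integral [CompleteSpace E] {g : ℝ → E} (hg : Continuous g) (a b : ℝ) :
    variationNorm (fun t => ∫ x in a..t, g x) a b = ∫ x in a..b, ‖g x‖ := by
  simp [variationNorm, hg.deriv_integral]

theorem variationNorm_mul_le {A : Type*} [NormedRing A] [NormedAlgebra ℝ A] [CompleteSpace A]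
    {f g : ℝ → A} (hf : ContDiff ℝ 1 f) (hg : ContDiff ℝ 1 g) {a b : ℝ} (hab : a ≤ b) :
    variationNorm (fun x => f x * g x) a b ≤ variationNorm f a b * variationNorm g a b := by
  have hfd := hf.continuous_deriv_one
  have hgd := hg.continuous_deriv_one
  have hF := hasDerivAt_variationNorm hf a
  have hG := hasDerivAt_variationNorm hg a
  have hFc : Continuous (variationNorm f a) :=
    continuous_iff_continuousAt.2 fun x => (hF x).continuousAt
  have hGc : Continuous (variationNorm g a) :=
    continuous_iff_continuousAt.2 fun x => (hG x).continuousAt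
  have hderiv : ∀ x, deriv (fun x => f x * g x) x = deriv f x * g x + f x * deriv g x := fun x =>
    deriv_fun_mul (hf.differentiable one_ne_zero x) (hg.differentiable one_ne_zero x)
  have hpointwise : ∀ x ∈ Set.Icc a b, ‖deriv f x * g x + f x * deriv g x‖ ≤
      ‖deriv f x‖ * variationNorm g a x + variationNorm f a x * ‖deriv g x‖ := fun x hx =>
    norm_add_le_of_le
      (norm_mul_le_of_le le_rfl (norm_le_variationNorm hg hx.1))
      (norm_mul_le_of_le (norm_le_variationNorm hf hx.1) le_rfl)
  calc variationNorm (fun x => f x * g x) a b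
      = ‖f a * g a‖ + ∫ x in a..b, ‖deriv f x * g x + f x * deriv g x‖ := by
        simp only [variationNorm, hderiv]
    _ ≤ ‖f a‖ * ‖g a‖ + ∫ x in a..b,
          (‖deriv f x‖ * variationNorm g a x + variationNorm f a x * ‖deriv g x‖) :=
        add_le_add (norm_mul_le _ _) <| intervalIntegral.integral_mono_on hab
          (Continuous.intervalIntegrable (by fun_prop) _ _)
          (Continuous.intervalIntegrable (by fun_prop) _ _) hpointwise
    _ = ‖f a‖ * ‖g a‖ + (variationNorm f a b * variationNorm g a b -
          variationNorm f a a * variationNorm g a a) := by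
        rw [intervalIntegral.integral_deriv_mul_eq_sub (fun x _ => hF x) (fun x _ => hG x)
          (hfd.norm.intervalIntegrable _ _) (hgd.norm.intervalIntegrable _ _)]
    _ = variationNorm f a b * variationNorm g a b := by
        simp [variationNorm]

end VariationNorm

theorem norm_exp_I_mul_ofReal_mul_ofReal (σ x : ℝ) : ‖Complex.exp (Complex.I * σ * x)‖ = 1 := by
  rw [mul_assoc, ← Complex.ofReal_mul, Complex.norm_exp_I_mul_ofReal]

section Oscillation

variable {E : Type*} [NormedAddCommGroup E] [NormedSpace ℂ E] [CompleteSpace E]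

theorem abs_mul_norm_integral_exp_smul_le (σ : ℝ) {f : ℝ → E} (hf : ContDiff ℝ 1 f) {a b : ℝ}
    (hab : a ≤ b) :
    |σ| * ‖∫ x in a..b, Complex.exp (Complex.I * σ * x) • f x‖ ≤ 2 * variationNorm f a b := by
  set e : ℝ → ℂ := fun x => Complex.exp (Complex.I * σ * x)
  have he_cont : Continuous e := by fun_prop
  have he_norm : ∀ x, ‖e x‖ = 1 := norm_exp_I_mul_ofReal_mul_ofReal σ
  have he_deriv : ∀ x : ℝ, HasDerivAt e (e x * (Complex.I * σ)) x := fun x => by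
    simpa using ((hasDerivAt_id (x : ℂ)).const_mul (Complex.I * σ)).cexp.comp_ofReal
  have hparts : ∫ x in a..b, e x • deriv f x =
      e b • f b - e a • f a - (Complex.I * σ) • ∫ x in a..b, e x • f x := by
    rw [intervalIntegral.integral_smul_deriv_eq_deriv_smul (fun x _ => he_deriv x)
      (fun x _ => (hf.differentiable one_ne_zero x).hasDerivAt)
      (Continuous.intervalIntegrable (by fun_prop) _ _)
      (hf.continuous_deriv_one.intervalIntegrable _ _), ← intervalIntegral.integral_smul]
    simp only [smul_smul, mul_comm]
  have hremainder : ‖∫ x in a..b, e x • deriv f x‖ ≤ ∫ x in a..b, ‖deriv f x‖ := by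
    simpa only [norm_smul, he_norm, one_mul] using
      intervalIntegral.norm_integral_le_integral_norm (f := fun x => e x • deriv f x) hab
  calc |σ| * ‖∫ x in a..b, e x • f x‖
      = ‖e b • f b - e a • f a - ∫ x in a..b, e x • deriv f x‖ := by
        rw [hparts, sub_sub_cancel, norm_smul]
        simp
    _ ≤ ‖f b‖ + ‖f a‖ + ∫ x in a..b, ‖deriv f x‖ := by
        refine norm_sub_le_of_le (norm_sub_le_of_le ?_ ?_) hremainder <;>
          rw [norm_smul, he_norm, one_mul]
    _ ≤ 2 * variationNorm f a b := by
        linarith [norm_le_variationNorm hf hab, variationNorm.eq_1 f a b]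

theorem norm_integral_exp_smul_le (σ : ℝ) {f : ℝ → E} (hf : ContDiff ℝ 1 f) {a b : ℝ}
    (hab : a ≤ b) :
    ‖∫ x in a..b, Complex.exp (Complex.I * σ * x) • f x‖ ≤
      (b - a + 2) / √(1 + σ ^ 2) * variationNorm f a b := by
  set J := ∫ x in a..b, Complex.exp (Complex.I * σ * x) • f x
  have htrivial : ‖J‖ ≤ variationNorm f a b * (b - a) := by
    rw [← abs_of_nonneg (sub_nonneg.2 hab)]
    refine intervalIntegral.norm_integral_le_of_norm_le_const fun x hx => ?_
    rw [Set.uIoc_of_le hab] at hx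
    rw [norm_smul, norm_exp_I_mul_ofReal_mul_ofReal, one_mul]
    exact (norm_le_variationNorm hf hx.1.le).trans (variationNorm_mono hf hx.1.le hx.2)
  have hbracket : √(1 + σ ^ 2) ≤ 1 + |σ| :=
    (Real.sqrt_le_left (by positivity)).2 (by nlinarith [sq_abs σ, abs_nonneg σ])
  rw [div_mul_eq_mul_div, le_div_iff₀ (by positivity)]
  calc ‖J‖ * √(1 + σ ^ 2) ≤ ‖J‖ * (1 + |σ|) := by gcongr
    _ ≤ (b - a + 2) * variationNorm f a b := by
        linarith [abs_mul_norm_integral_exp_smul_le σ hf hab]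

end Oscillation

section PiSum

variable {ι κ X E : Type*} [Fintype ι] [Fintype κ] [MeasurableSpace X] (μ : Measure X)
  [SigmaFinite μ] [NormedAddCommGroup E]

theorem integrable_pi_sum_iff {f : (ι ⊕ κ → X) → E} :
    Integrable (fun p : (ι → X) × (κ → X) => f (Sum.elim p.1 p.2))
      ((Measure.pi fun _ => μ).prod (Measure.pi fun _ => μ)) ↔
    Integrable f (Measure.pi fun _ => μ) := by
  have hμ := measurePreserving_sumPiEquivProdPi_symm (fun _ : ι ⊕ κ => μ)
  exact hμ.integrable_comp_emb (MeasurableEquiv.measurableEmbedding _)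

variable [NormedSpace ℝ E]

theorem integral_pi_sum_eq_prod (f : (ι ⊕ κ → X) → E) :
    ∫ s, f s ∂(Measure.pi fun _ => μ) =
      ∫ p : (ι → X) × (κ → X), f (Sum.elim p.1 p.2)
        ∂((Measure.pi fun _ => μ).prod (Measure.pi fun _ => μ)) :=
  ((measurePreserving_sumPiEquivProdPi_symm fun _ : ι ⊕ κ => μ).integral_comp' f).symm

theorem integral_pi_sum_mul {𝕜 : Type*} [RCLike 𝕜] (f : (ι → X) → 𝕜) (g : (κ → X) → 𝕜) :
    ∫ s : ι ⊕ κ → X, f (s ∘ Sum.inl) * g (s ∘ Sum.inr) ∂(Measure.pi fun _ => μ) =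
      (∫ y, f y ∂(Measure.pi fun _ => μ)) * ∫ z, g z ∂(Measure.pi fun _ => μ) := by
  rw [integral_pi_sum_eq_prod, ← integral_prod_mul]
  rfl

theorem integral_pi_unit_sum {f : (Unit ⊕ κ → X) → E} (hf : Integrable f (Measure.pi fun _ => μ)) :
    ∫ s, f s ∂(Measure.pi fun _ => μ) =
      ∫ x, ∫ z, f (Sum.elim (fun _ => x) z) ∂(Measure.pi fun _ => μ) ∂μ := by
  rw [integral_pi_sum_eq_prod, integral_prod _ ((integrable_pi_sum_iff μ).2 hf)]
  exact ((measurePreserving_funUnique μ Unit).symm.integral_comp' _).symm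

end PiSum

namespace TernaryTree

section Node

variable {a b c : TernaryTree}

/-- The root of `node a b c`. -/
abbrev Idx.root : (node a b c).Idx := Sum.inl ()

/-- The copy in `node a b c` of an internal node of the first subtree. -/
abbrev Idx.left (v : a.Idx) : (node a b c).Idx := Sum.inr (Sum.inl v)

/-- The copy in `node a b c` of an internal node of the second subtree. -/
abbrev Idx.mid (v : b.Idx) : (node a b c).Idx := Sum.inr (Sum.inr (Sum.inl v))

/-- The copy in `node a b c` of an internal node of the third subtree. -/
abbrev Idx.right (v : c.Idx) : (node a b c).Idx := Sum.inr (Sum.inr (Sum.inr v))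

theorem forall_idx_node {p : (node a b c).Idx → Prop} :
    (∀ v, p v) ↔ p .root ∧ (∀ v, p (.left v)) ∧ (∀ v, p (.mid v)) ∧ ∀ v, p (.right v) :=
  ⟨fun h => ⟨h _, fun _ => h _, fun _ => h _, fun _ => h _⟩,
    fun ⟨hroot, hleft, hmid, hright⟩ v => match v with
      | .inl () => hroot
      | .inr (.inl v) => hleft v
      | .inr (.inr (.inl v)) => hmid v
      | .inr (.inr (.inr v)) => hright v⟩

theorem prod_idx_node {M : Type*} [CommMonoid M] (f : (node a b c).Idx → M) :
    ∏ v, f v =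
      f .root * ((∏ v, f (.left v)) * ((∏ v, f (.mid v)) * ∏ v, f (.right v))) :=
  (Fintype.prod_sum_type f).trans (by
    rw [Fintype.prod_sum_type, Fintype.prod_sum_type, Fintype.prod_unique])

theorem mem_simplex_node {t : ℝ} {s : (node a b c).Idx → ℝ} :
    s ∈ (node a b c).simplex t ↔
      s .root ∈ Set.Icc 0 t ∧ s ∘ .left ∈ a.simplex (s .root) ∧
        s ∘ .mid ∈ b.simplex (s .root) ∧ s ∘ .right ∈ c.simplex (s .root) := by
  simp only [simplex, Set.mem_ofPred_eq, forall_idx_node, Function.comp_apply, Set.mem_Icc]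
  simp only [desc, true_implies, false_implies, implies_true, true_and, and_true, forall_and]
  grind

end Node

theorem isCompact_simplex (T : TernaryTree) (t : ℝ) : IsCompact (T.simplex t) := by
  have hbox : T.simplex t = Set.Icc (fun _ => 0) (fun _ => t) ∩
      ⋂ (v) (w) (_ : T.desc v w), {s | s v ≤ s w} := by
    ext s
    simp [simplex, Pi.le_def, forall_and]
  rw [hbox]
  exact isCompact_Icc.inter_right <| isClosed_iInter fun v => isClosed_iInter fun w =>
    isClosed_iInter fun _ => isClosed_le (continuous_apply v) (continuous_apply w)

/-- The integrand `∏ e^{iσ_v s_v}` of the tree integral, extended by `0` outside `R(T, t)`, which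
lets it factor over the root and the three subtrees. -/
noncomputable def phaseOnSimplex (T : TernaryTree) (σ : T.Idx → ℝ) (t : ℝ) :
    (T.Idx → ℝ) → ℂ :=
  (T.simplex t).indicator fun s => ∏ v, Complex.exp (Complex.I * σ v * s v)

theorem integral_phaseOnSimplex (T : TernaryTree) (σ : T.Idx → ℝ) (t : ℝ) :
    ∫ s, T.phaseOnSimplex σ t s ∂(Measure.pi fun _ => volume) =
      ∫ s in T.simplex t, (∏ v, Complex.exp (Complex.I * σ v * s v))
        ∂(Measure.pi fun _ => volume) :=
  integral_indicator (T.isCompact_simplex t).measurableSet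

theorem integrable_phaseOnSimplex (T : TernaryTree) (σ : T.Idx → ℝ) (t : ℝ) :
    Integrable (T.phaseOnSimplex σ t) (Measure.pi fun _ => volume) :=
  (integrable_indicator_iff (T.isCompact_simplex t).measurableSet).2 <|
    ContinuousOn.integrableOn_compact (T.isCompact_simplex t) (by fun_prop)

theorem phaseOnSimplex_leaf (σ : leaf.Idx → ℝ) (t : ℝ) (s : leaf.Idx → ℝ) :
    leaf.phaseOnSimplex σ t s = 1 := by
  have hs : s ∈ leaf.simplex t := ⟨fun v => v.elim, fun v => v.elim⟩
  rw [phaseOnSimplex, Set.indicator_of_mem hs]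
  rfl

theorem phaseOnSimplex_node {a b c : TernaryTree} (σ : (node a b c).Idx → ℝ) (t : ℝ)
    (s : (node a b c).Idx → ℝ) :
    (node a b c).phaseOnSimplex σ t s =
      (Set.Icc 0 t).indicator (fun x : ℝ => Complex.exp (Complex.I * σ .root * x)) (s .root) *
        (a.phaseOnSimplex (σ ∘ .left) (s .root) (s ∘ .left) *
          (b.phaseOnSimplex (σ ∘ .mid) (s .root) (s ∘ .mid) *
            c.phaseOnSimplex (σ ∘ .right) (s .root) (s ∘ .right))) := by
  classical
  simp only [phaseOnSimplex, Set.indicator_apply, mem_simplex_node, prod_idx_node, ite_and,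
    Function.comp_apply]
  split_ifs <;> simp

theorem integral_phaseOnSimplex_node {a b c : TernaryTree} (σ : (node a b c).Idx → ℝ) {t : ℝ}
    (ht : 0 ≤ t) :
    ∫ s, (node a b c).phaseOnSimplex σ t s ∂(Measure.pi fun _ => volume) =
      ∫ x in (0 : ℝ)..t, Complex.exp (Complex.I * σ .root * x) *
        ((∫ y, a.phaseOnSimplex (σ ∘ .left) x y ∂(Measure.pi fun _ => volume)) *
          ((∫ y, b.phaseOnSimplex (σ ∘ .mid) x y ∂(Measure.pi fun _ => volume)) *
            ∫ y, c.phaseOnSimplex (σ ∘ .right) x y ∂(Measure.pi fun _ => volume))) := by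
  rw [intervalIntegral.integral_of_le ht, ← integral_Icc_eq_integral_Ioc,
    ← integral_indicator measurableSet_Icc]
  refine (integral_pi_unit_sum volume ((node a b c).integrable_phaseOnSimplex σ t)).trans ?_
  refine integral_congr_ae (.of_forall fun x => ?_)
  simp only [Set.indicator_mul_left]
  rw [← integral_pi_sum_mul, ← integral_pi_sum_mul, ← integral_const_mul]
  exact integral_congr_ae (.of_forall fun z => phaseOnSimplex_node σ t (Sum.elim (fun _ => x) z))

/-- The tree integral as an iterated one-dimensional integral, from the root to the leaves. -/
noncomputable def oscIntegral : (T : TernaryTree) → (T.Idx → ℝ) → ℝ → ℂ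
  | leaf, _, _ => 1
  | node a b c, σ, t => ∫ x in (0 : ℝ)..t, Complex.exp (Complex.I * σ .root * x) •
      (a.oscIntegral (σ ∘ .left) x *
        (b.oscIntegral (σ ∘ .mid) x * c.oscIntegral (σ ∘ .right) x))

theorem integral_phaseOnSimplex_eq_oscIntegral (T : TernaryTree) (σ : T.Idx → ℝ) {t : ℝ}
    (ht : 0 ≤ t) :
    ∫ s, T.phaseOnSimplex σ t s ∂(Measure.pi fun _ => volume) = T.oscIntegral σ t := by
  induction T generalizing t with
  | leaf =>
    have : IsEmpty leaf.Idx := inferInstanceAs (IsEmpty Empty)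
    rw [Measure.pi_of_empty]
    simp [phaseOnSimplex_leaf, oscIntegral]
  | node a b c iha ihb ihc =>
    rw [integral_phaseOnSimplex_node σ ht, oscIntegral]
    refine intervalIntegral.integral_congr fun x hx => ?_
    rw [Set.uIcc_of_le ht] at hx
    simp only [iha _ hx.1, ihb _ hx.1, ihc _ hx.1, smul_eq_mul]

theorem contDiff_oscIntegral (T : TernaryTree) (σ : T.Idx → ℝ) :
    ContDiff ℝ 1 (T.oscIntegral σ) := by
  induction T with
  | leaf => exact contDiff_const
  | node a b c iha ihb ihc =>
    have ha := (iha (σ ∘ .left)).continuous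
    have hb := (ihb (σ ∘ .mid)).continuous
    have hc := (ihc (σ ∘ .right)).continuous
    exact contDiff_one_integral (by fun_prop) 0

/-- The depth of an internal node, the root having depth `0`. -/
def depth : (T : TernaryTree) → T.Idx → ℕ
  | leaf, v => v.elim
  | node _ _ _, .inl _ => 0
  | node a _ _, .inr (.inl v) => a.depth v + 1
  | node _ b _, .inr (.inr (.inl v)) => b.depth v + 1
  | node _ _ c, .inr (.inr (.inr v)) => c.depth v + 1

/-- The product over the tree of the factor `t` of a trivially estimated variable and the factor
`(t + 2) ⟨σ_v⟩⁻¹` of an integrated one, alternating with the depth. The root is estimated trivially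
if `p` is even and integrated if `p` is odd, so that passing to a subtree replaces `p` by `p + 1`.
-/
noncomputable def alternatingBound (T : TernaryTree) (p : ℕ) (σ : T.Idx → ℝ) (t : ℝ) : ℝ :=
  ∏ v, if Even (T.depth v + p) then t else (t + 2) / √(1 + σ v ^ 2)

theorem alternatingBound_leaf (p : ℕ) (σ : leaf.Idx → ℝ) (t : ℝ) :
    leaf.alternatingBound p σ t = 1 := rfl

theorem alternatingBound_node {a b c : TernaryTree} (p : ℕ) (σ : (node a b c).Idx → ℝ) (t : ℝ) :
    (node a b c).alternatingBound p σ t =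
      (if Even p then t else (t + 2) / √(1 + σ .root ^ 2)) *
        (a.alternatingBound (p + 1) (σ ∘ .left) t *
          (b.alternatingBound (p + 1) (σ ∘ .mid) t *
            c.alternatingBound (p + 1) (σ ∘ .right) t)) := by
  simp only [alternatingBound, prod_idx_node, depth, zero_add, add_right_comm _ 1 p, add_assoc,
    Function.comp_apply]

theorem alternatingBound_nonneg (T : TernaryTree) (p : ℕ) (σ : T.Idx → ℝ) {t : ℝ} (ht : 0 ≤ t) :
    0 ≤ T.alternatingBound p σ t :=
  Finset.prod_nonneg fun v _ => by split_ifs <;> positivity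

theorem alternatingBound_mul_succ (T : TernaryTree) (p : ℕ) (σ : T.Idx → ℝ) (t : ℝ) :
    T.alternatingBound p σ t * T.alternatingBound (p + 1) σ t =
      ∏ v, (t + 2) * t / √(1 + σ v ^ 2) := by
  rw [alternatingBound, alternatingBound, ← Finset.prod_mul_distrib]
  refine Finset.prod_congr rfl fun v _ => ?_
  simp only [← add_assoc, Nat.even_add_one]
  split_ifs <;> ring

theorem norm_oscIntegral_node_le {a b c : TernaryTree} (σ : (node a b c).Idx → ℝ)
    {s t A B C : ℝ} (hs : 0 ≤ s) (hst : s ≤ t)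
    (hA : variationNorm (a.oscIntegral (σ ∘ .left)) 0 t ≤ A)
    (hB : variationNorm (b.oscIntegral (σ ∘ .mid)) 0 t ≤ B)
    (hC : variationNorm (c.oscIntegral (σ ∘ .right)) 0 t ≤ C) :
    ‖(node a b c).oscIntegral σ s‖ ≤ (t + 2) / √(1 + σ .root ^ 2) * (A * (B * C)) := by
  have ht := hs.trans hst
  have ha := a.contDiff_oscIntegral (σ ∘ .left)
  have hb := b.contDiff_oscIntegral (σ ∘ .mid)
  have hc := c.contDiff_oscIntegral (σ ∘ .right)
  have hbc := hb.mul hc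
  have hBC := (variationNorm_mul_le hb hc ht).trans <|
    mul_le_mul hB hC (variationNorm_nonneg _ ht) ((variationNorm_nonneg _ ht).trans hB)
  have hABC := (variationNorm_mul_le ha hbc ht).trans <|
    mul_le_mul hA hBC (variationNorm_nonneg _ ht) ((variationNorm_nonneg _ ht).trans hA)
  calc ‖(node a b c).oscIntegral σ s‖
      ≤ (s - 0 + 2) / √(1 + σ .root ^ 2) * variationNorm _ 0 s :=
        norm_integral_exp_smul_le (σ .root) (ha.mul hbc) hs
    _ ≤ (t + 2) / √(1 + σ .root ^ 2) * (A * (B * C)) := by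
        rw [sub_zero]
        gcongr
        · exact variationNorm_nonneg _ hs
        · exact (variationNorm_mono (ha.mul hbc) hs hst).trans hABC

theorem variationNorm_oscIntegral_node_le {a b c : TernaryTree} (σ : (node a b c).Idx → ℝ)
    {t A B C : ℝ} (ht : 0 ≤ t)
    (hA : ∀ s ∈ Set.Icc 0 t, ‖a.oscIntegral (σ ∘ .left) s‖ ≤ A)
    (hB : ∀ s ∈ Set.Icc 0 t, ‖b.oscIntegral (σ ∘ .mid) s‖ ≤ B)
    (hC : ∀ s ∈ Set.Icc 0 t, ‖c.oscIntegral (σ ∘ .right) s‖ ≤ C) :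
    variationNorm ((node a b c).oscIntegral σ) 0 t ≤ t * (A * (B * C)) := by
  have ha := (a.contDiff_oscIntegral (σ ∘ .left)).continuous
  have hb := (b.contDiff_oscIntegral (σ ∘ .mid)).continuous
  have hc := (c.contDiff_oscIntegral (σ ∘ .right)).continuous
  refine (variationNorm_integral (by fun_prop) 0 t).trans_le ?_
  calc ∫ x in (0 : ℝ)..t, ‖Complex.exp (Complex.I * σ .root * x) • (a.oscIntegral (σ ∘ .left) x *
        (b.oscIntegral (σ ∘ .mid) x * c.oscIntegral (σ ∘ .right) x))‖
      ≤ ∫ _ in (0 : ℝ)..t, A * (B * C) := by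
        refine intervalIntegral.integral_mono_on ht
          (Continuous.intervalIntegrable (by fun_prop) _ _) (by simp) fun x hx => ?_
        rw [norm_smul, norm_exp_I_mul_ofReal_mul_ofReal, one_mul]
        exact norm_mul_le_of_le (hA x hx) (norm_mul_le_of_le (hB x hx) (hC x hx))
    _ = t * (A * (B * C)) := by
        rw [intervalIntegral.integral_const, sub_zero, smul_eq_mul]

theorem oscIntegral_le_alternatingBound (T : TernaryTree) (p : ℕ) (σ : T.Idx → ℝ) {t : ℝ}
    (ht : 0 ≤ t) :
    (Even p → variationNorm (T.oscIntegral σ) 0 t ≤ T.alternatingBound p σ t) ∧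
      (¬Even p → ∀ s ∈ Set.Icc 0 t, ‖T.oscIntegral σ s‖ ≤ T.alternatingBound p σ t) := by
  induction T generalizing p with
  | leaf =>
    simp only [alternatingBound_leaf]
    exact ⟨fun _ => (variationNorm_const 1 0 t).trans_le norm_one.le, fun _ _ _ => norm_one.le⟩
  | node a b c iha ihb ihc =>
    rw [alternatingBound_node]
    refine ⟨fun hp => ?_, fun hp s hs => ?_⟩
    · have hp' : ¬Even (p + 1) := by simpa [Nat.even_add_one] using hp
      rw [if_pos hp]
      exact variationNorm_oscIntegral_node_le σ ht ((iha _ _).2 hp') ((ihb _ _).2 hp')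
        ((ihc _ _).2 hp')
    · have hp' : Even (p + 1) := Nat.even_add_one.2 hp
      rw [if_neg hp]
      exact norm_oscIntegral_node_le σ hs.1 hs.2 ((iha _ _).1 hp') ((ihb _ _).1 hp')
        ((ihc _ _).1 hp')

theorem norm_oscIntegral_sq_le (T : TernaryTree) (σ : T.Idx → ℝ) {t : ℝ} (ht : 0 ≤ t) :
    ‖T.oscIntegral σ t‖ ^ 2 ≤ ∏ v, (t + 2) * t / √(1 + σ v ^ 2) := by
  have heven := (norm_le_variationNorm (T.contDiff_oscIntegral σ) ht).trans
    ((T.oscIntegral_le_alternatingBound 0 σ ht).1 Even.zero)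
  have hodd := (T.oscIntegral_le_alternatingBound 1 σ ht).2 Nat.not_even_one t ⟨ht, le_rfl⟩
  rw [← T.alternatingBound_mul_succ 0, sq]
  exact mul_le_mul heven hodd (norm_nonneg _) (T.alternatingBound_nonneg _ _ ht)

end TernaryTree

theorem sqrt_prod_const_div {ι : Type*} [Fintype ι] {K : ℝ} (hK : 0 ≤ K) {r : ι → ℝ}
    (hr : ∀ i, 0 ≤ r i) :
    √(∏ i, K / r i) = K ^ ((Fintype.card ι : ℝ) / 2) * ∏ i, r i ^ (-(1 / 2 : ℝ)) := by
  rw [Real.sqrt_eq_rpow, ← Real.finsetProd_rpow _ _ fun i _ => div_nonneg hK (hr i)]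
  simp only [div_eq_mul_inv K, Real.mul_rpow hK (inv_nonneg.2 (hr _)), Real.inv_rpow (hr _),
    ← Real.rpow_neg (hr _), Finset.prod_mul_distrib, Finset.prod_const, Finset.card_univ,
    ← Real.rpow_mul_natCast hK, one_div_mul_eq_div]

theorem tree_oscillatory_integral_bound_general (T : TernaryTree) {t : ℝ} (ht : 0 ≤ t)
    (σ : T.Idx → ℝ) :
    ‖∫ s in T.simplex t, (∏ v : T.Idx, Complex.exp (Complex.I * σ v * s v))
        ∂(Measure.pi fun _ : T.Idx => (volume : Measure ℝ))‖ ≤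
      ((t + 2) * t) ^ ((Fintype.card T.Idx : ℝ) / 2) *
        ∏ v : T.Idx, √(1 + σ v ^ 2) ^ (-(1 / 2 : ℝ)) := by
  rw [← T.integral_phaseOnSimplex, T.integral_phaseOnSimplex_eq_oscIntegral σ ht,
    ← sqrt_prod_const_div (by positivity) fun v => Real.sqrt_nonneg _]
  exact Real.le_sqrt_of_sq_le (T.norm_oscIntegral_sq_le σ ht)

/-- Lemma 3.2: `|∫_{R(T,t)} ∏_{v∈T⁰} e^{iσ_v s_v} ds| ≤
(Ct)^{|T⁰|/2} ∏_{v∈T⁰} ⟨σ_v⟩^{-1/2}` for an absolute constant `C`. -/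
theorem tree_oscillatory_integral_bound :
    ∃ C : ℝ, 0 < C ∧ ∀ (T : TernaryTree) (t : ℝ), t ∈ Set.Icc (0:ℝ) 1 →
      ∀ σ : T.Idx → ℝ,
      ‖∫ s in T.simplex t, (∏ v : T.Idx, Complex.exp (Complex.I * σ v * s v))
          ∂(Measure.pi fun _ : T.Idx => (volume : Measure ℝ))‖ ≤
        (C * t) ^ ((Fintype.card T.Idx : ℝ) / 2) *
          ∏ v : T.Idx, Real.sqrt (1 + σ v ^ 2) ^ (-(1/2 : ℝ)) := by
  refine ⟨3, three_pos, fun T t ⟨ht₀, ht₁⟩ σ => ?_⟩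
  exact (tree_oscillatory_integral_bound_general T ht₀ σ).trans (by gcongr; linarith)
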